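/- Let n ≥ 3, λ ≥ 1, Ā > 0, and let A : ℝⁿ → Sym_n be a C¹ symmetric matrix-valued function with sup_z(|A(z)| + |DA(z)|) ≤ Ā and λ⁻¹|ξ|² ≤ A(z)ξ·ξ ≤ λ|ξ|² for all z, ξ. Fix y ∈ ℝⁿ and define F(z) = ⟨A(z)(z−y), z−y⟩^{(2−n)/2} for z ≠ y. Then there exists C > 0 depending only on n and λ such that for all 0 < ρ ≤ R and all z₁, z₂ such that the segment [z₁,z₂] is contained in {z : ρ ≤ |z−y| ≤ R}, one has |F(z₁) − F(z₂)| ≤ C(1 + ĀR)|z₁−z₂| ρ^{1−n}. -/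

import Mathlib

open Set
open scoped RealInnerProductSpace

/-! The kernel is `F = q ^ p` with `q z = ⟪A z (z - y), z - y⟫` and `p = (2 - n) / 2`. Writing
`r = ‖z - y‖`, ellipticity gives `q ≥ λ⁻¹ r²`, while the product rule gives
`‖Dq‖ ≤ 2 ‖A‖ r + ‖DA‖ r²`. Here `‖A‖ ≤ λ`, since the norm of a symmetric operator is the supremum
of its absolute Rayleigh quotients. Hence `‖DF‖ = |p| q ^ (p - 1) ‖Dq‖` is at most a constant times
`(1 + Ā R) r ^ (2 p - 1)`. As `2 p - 1 = 1 - n ≤ 0`, this is largest at `r = ρ`, and the mean value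
inequality on the segment applies. -/

section

variable {E : Type*} [NormedAddCommGroup E] [InnerProductSpace ℝ E]

lemma opNorm_le_of_isPositive_of_inner_le {T : E →L[ℝ] E} (hT : T.IsPositive) {K : ℝ}
    (hK : 0 ≤ K) (hle : ∀ ξ, ⟪T ξ, ξ⟫ ≤ K * ‖ξ‖ ^ 2) : ‖T‖ ≤ K := by
  rw [T.norm_eq_iSup_rayleighQuotient hT.isSymmetric]
  refine Real.iSup_le (fun ξ => ?_) hK
  have hnonneg : 0 ≤ T.rayleighQuotient ξ := div_nonneg (hT.inner_nonneg_left ξ) (sq_nonneg _)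
  rw [abs_of_nonneg hnonneg]
  exact div_le_of_le_mul₀ (sq_nonneg _) hK (hle ξ)

/-- The quadratic form of the variable operator `A` at the displacement from the pole `y`; the
anisotropic kernel with pole `y` is a real power of it. -/
def poleForm (A : E → E →L[ℝ] E) (y z : E) : ℝ := ⟪A z (z - y), z - y⟫

/-- The derivative at `z` of `poleForm A y`, in terms of the value `T = A z`, the derivative
`T' = DA z` and the displacement `w = z - y`. -/
noncomputable def poleFormDeriv (T : E →L[ℝ] E) (T' : E →L[ℝ] E →L[ℝ] E) (w : E) : E →L[ℝ] ℝ :=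
  innerSL ℝ (T w) + innerSL ℝ w ∘L (T + T'.flip w)

lemma hasFDerivWithinAt_poleForm {A : E → E →L[ℝ] E} {T' : E →L[ℝ] E →L[ℝ] E} {s : Set E}
    {z : E} (hA : HasFDerivWithinAt A T' s z) (y : E) :
    HasFDerivWithinAt (poleForm A y) (poleFormDeriv (A z) T' (z - y)) s z := by
  have hw : HasFDerivWithinAt (fun z => z - y) (.id ℝ E) s z :=
    (hasFDerivWithinAt_id z s).sub_const y
  refine ((hA.clm_apply hw).inner ℝ hw).congr_fderiv ?_
  ext h
  simp [poleFormDeriv, real_inner_comm, inner_add_right, -map_sub]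

lemma norm_poleFormDeriv_le (T : E →L[ℝ] E) (T' : E →L[ℝ] E →L[ℝ] E) (w : E) :
    ‖poleFormDeriv T T' w‖ ≤ 2 * ‖T‖ * ‖w‖ + ‖T'‖ * ‖w‖ ^ 2 := by
  have hflip : ‖T'.flip w‖ ≤ ‖T'‖ * ‖w‖ := T'.opNorm_flip ▸ T'.flip.le_opNorm w
  calc ‖poleFormDeriv T T' w‖
      ≤ ‖innerSL ℝ (T w)‖ + ‖innerSL ℝ w‖ * ‖T + T'.flip w‖ :=
        norm_add_le_of_le le_rfl (ContinuousLinearMap.opNorm_comp_le _ _)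
    _ ≤ ‖T‖ * ‖w‖ + ‖w‖ * (‖T‖ + ‖T'‖ * ‖w‖) := by
        rw [innerSL_apply_norm, innerSL_apply_norm]
        gcongr
        · exact T.le_opNorm w
        · exact norm_add_le_of_le le_rfl hflip
    _ = 2 * ‖T‖ * ‖w‖ + ‖T'‖ * ‖w‖ ^ 2 := by ring

lemma rpow_le_of_mul_sq_le_of_nonpos {a c q r : ℝ} (ha : a ≤ 0) (hc : 0 < c) (hr : 0 < r)
    (hq : c * r ^ 2 ≤ q) : q ^ a ≤ c ^ a * r ^ (2 * a) :=
  calc q ^ a ≤ (c * r ^ 2) ^ a := Real.rpow_le_rpow_of_nonpos (by positivity) hq ha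
    _ = c ^ a * r ^ (2 * a) := by
      rw [Real.mul_rpow hc.le (sq_nonneg r), ← Real.rpow_natCast_mul hr.le, Nat.cast_ofNat]

lemma norm_rpow_smul_poleFormDeriv_le {T : E →L[ℝ] E} {T' : E →L[ℝ] E →L[ℝ] E} {w : E}
    {p c K M ρ R : ℝ} (hp : p ≤ 1 / 2) (hc : 0 < c) (hρ : 0 < ρ) (hρw : ρ ≤ ‖w‖) (hwR : ‖w‖ ≤ R)
    (hT : ‖T‖ ≤ K) (hT' : ‖T'‖ ≤ M) (hcoer : c * ‖w‖ ^ 2 ≤ ⟪T w, w⟫) :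
    ‖(p * ⟪T w, w⟫ ^ (p - 1)) • poleFormDeriv T T' w‖ ≤
      |p| * c ^ (p - 1) * (2 * K + M * R) * ρ ^ (2 * p - 1) := by
  have hw : 0 < ‖w‖ := hρ.trans_le hρw
  have hK : 0 ≤ K := (norm_nonneg T).trans hT
  have hM : 0 ≤ M := (norm_nonneg T').trans hT'
  have hR : 0 ≤ R := hw.le.trans hwR
  have hform : 0 ≤ ⟪T w, w⟫ := le_trans (by positivity) hcoer
  have hpow : ‖w‖ ^ (2 * (p - 1)) * ‖w‖ = ‖w‖ ^ (2 * p - 1) := by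
    rw [← Real.rpow_add_one hw.ne']
    ring_nf
  calc ‖(p * ⟪T w, w⟫ ^ (p - 1)) • poleFormDeriv T T' w‖
      = |p| * ⟪T w, w⟫ ^ (p - 1) * ‖poleFormDeriv T T' w‖ := by
        rw [norm_smul, norm_mul, Real.norm_eq_abs, Real.norm_of_nonneg (Real.rpow_nonneg hform _)]
    _ ≤ |p| * (c ^ (p - 1) * ‖w‖ ^ (2 * (p - 1))) * (2 * K * ‖w‖ + M * ‖w‖ ^ 2) := by
        gcongr
        · exact rpow_le_of_mul_sq_le_of_nonpos (by linarith) hc hw hcoer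
        · exact (norm_poleFormDeriv_le T T' w).trans (by gcongr)
    _ = |p| * c ^ (p - 1) * (2 * K + M * ‖w‖) * ‖w‖ ^ (2 * p - 1) := by
        rw [← hpow]
        ring
    _ ≤ |p| * c ^ (p - 1) * (2 * K + M * R) * ρ ^ (2 * p - 1) := by
        gcongr ?_ * (_ + _ * ?_) * ?_
        exact Real.rpow_le_rpow_of_nonpos hρ hρw (by linarith)

theorem anisotropic_kernel_mean_value_bound_general {s : Set E} (hs : Convex ℝ s)
    {A : E → E →L[ℝ] E} {A' : E → E →L[ℝ] E →L[ℝ] E} {y : E} {p c K M ρ R : ℝ}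
    (hp : p ≤ 1 / 2) (hc : 0 < c) (hρ : 0 < ρ)
    (hannulus : ∀ z ∈ s, ρ ≤ ‖z - y‖ ∧ ‖z - y‖ ≤ R)
    (hderiv : ∀ z ∈ s, HasFDerivWithinAt A (A' z) s z)
    (hA : ∀ z ∈ s, ‖A z‖ ≤ K) (hA' : ∀ z ∈ s, ‖A' z‖ ≤ M)
    (hcoer : ∀ z ∈ s, c * ‖z - y‖ ^ 2 ≤ ⟪A z (z - y), z - y⟫)
    {z₁ z₂ : E} (hz₁ : z₁ ∈ s) (hz₂ : z₂ ∈ s) :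
    |⟪A z₁ (z₁ - y), z₁ - y⟫ ^ p - ⟪A z₂ (z₂ - y), z₂ - y⟫ ^ p| ≤
      |p| * c ^ (p - 1) * (2 * K + M * R) * ρ ^ (2 * p - 1) * ‖z₁ - z₂‖ := by
  have hkernel : ∀ z ∈ s, HasFDerivWithinAt (fun z => poleForm A y z ^ p)
      ((p * poleForm A y z ^ (p - 1)) • poleFormDeriv (A z) (A' z) (z - y)) s z := by
    intro z hz
    have hr : 0 < ‖z - y‖ := hρ.trans_le (hannulus z hz).1
    have hpos : 0 < poleForm A y z := lt_of_lt_of_le (by positivity) (hcoer z hz)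
    exact (hasFDerivWithinAt_poleForm (hderiv z hz) y).rpow_const (.inl hpos.ne')
  refine hs.norm_image_sub_le_of_norm_hasFDerivWithin_le hkernel (fun z hz => ?_) hz₂ hz₁
  obtain ⟨hρz, hzR⟩ := hannulus z hz
  exact norm_rpow_smul_poleFormDeriv_le hp hc hρ hρz hzR (hA z hz) (hA' z hz) (hcoer z hz)

end

/-- Mean-value bound for the anisotropic fundamental-solution kernel
`F(z) = ⟨A(z)(z-y), z-y⟩^{(2-n)/2}` away from the pole: there is `C > 0` depending only on
`n` and `λ` such that `|F(z₁)-F(z₂)| ≤ C(1+ĀR)|z₁-z₂| ρ^{1-n}` whenever the segment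
`[z₁,z₂]` stays in the annulus `{ρ ≤ |z-y| ≤ R}`. -/
theorem anisotropic_kernel_mean_value_bound
    (n : ℕ) (hn : 3 ≤ n) (lam : ℝ) (hlam : 1 ≤ lam) :
    ∃ C > 0,
      ∀ Abar : ℝ, 0 < Abar →
      ∀ A : EuclideanSpace ℝ (Fin n) → (EuclideanSpace ℝ (Fin n) →L[ℝ] EuclideanSpace ℝ (Fin n)),
        ContDiff ℝ 1 A →
        (∀ z, ‖A z‖ + ‖fderiv ℝ A z‖ ≤ Abar) →
        (∀ z ξ η, ⟪A z ξ, η⟫ = ⟪ξ, A z η⟫) →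
        (∀ z ξ, lam⁻¹ * ‖ξ‖ ^ 2 ≤ ⟪A z ξ, ξ⟫ ∧ ⟪A z ξ, ξ⟫ ≤ lam * ‖ξ‖ ^ 2) →
      ∀ y : EuclideanSpace ℝ (Fin n), ∀ ρ R : ℝ, 0 < ρ → ρ ≤ R →
      ∀ z₁ z₂ : EuclideanSpace ℝ (Fin n),
        segment ℝ z₁ z₂ ⊆ {z | ρ ≤ ‖z - y‖ ∧ ‖z - y‖ ≤ R} →
        |⟪A z₁ (z₁ - y), z₁ - y⟫ ^ (((2 : ℝ) - n) / 2) -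
            ⟪A z₂ (z₂ - y), z₂ - y⟫ ^ (((2 : ℝ) - n) / 2)| ≤
          C * (1 + Abar * R) * ‖z₁ - z₂‖ * ρ ^ ((1 : ℝ) - n) := by
  have hlam₀ : 0 < lam := by linarith
  have hn' : (3 : ℝ) ≤ n := by exact_mod_cast hn
  obtain ⟨p, hp⟩ : ∃ p : ℝ, p = (2 - n) / 2 := ⟨_, rfl⟩
  have hp₀ : p ≠ 0 := by linarith
  rw [← hp, show (1 : ℝ) - n = 2 * p - 1 by rw [hp]; ring]
  refine ⟨|p| * lam⁻¹ ^ (p - 1) * (2 * lam), by positivity, ?_⟩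
  intro Abar hAbar A hA hbound hsymm hell y ρ R hρ hρR z₁ z₂ hannulus
  have hnorm (z) : ‖A z‖ ≤ lam :=
    opNorm_le_of_isPositive_of_inner_le
      ⟨hsymm z, fun ξ => le_trans (by positivity) (hell z ξ).1⟩ hlam₀.le fun ξ => (hell z ξ).2
  have hfderiv (z) : ‖fderiv ℝ A z‖ ≤ Abar :=
    le_of_add_le_of_nonneg_right (hbound z) (norm_nonneg _)
  have hAR : 0 ≤ Abar * R := mul_nonneg hAbar.le (hρ.le.trans hρR)
  have hconst : 2 * lam + Abar * R ≤ 2 * lam * (1 + Abar * R) := by nlinarith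
  calc _ ≤ |p| * lam⁻¹ ^ (p - 1) * (2 * lam + Abar * R) * ρ ^ (2 * p - 1) * ‖z₁ - z₂‖ :=
        anisotropic_kernel_mean_value_bound_general (convex_segment z₁ z₂) (by linarith)
          (inv_pos.2 hlam₀) hρ hannulus
          (fun z _ => (hA.differentiable one_ne_zero z).hasFDerivAt.hasFDerivWithinAt)
          (fun z _ => hnorm z) (fun z _ => hfderiv z) (fun z _ => (hell z _).1)
          (left_mem_segment ℝ z₁ z₂) (right_mem_segment ℝ z₁ z₂)
    _ ≤ |p| * lam⁻¹ ^ (p - 1) * (2 * lam * (1 + Abar * R)) * ρ ^ (2 * p - 1) * ‖z₁ - z₂‖ := by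
        gcongr
    _ = _ := by ring
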